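/- Let A be an Artin group with Artin generating set S, let a, b ∈ S be two generators not connected by an edge in the defining graph (i.e., no relation between a and b). Then the subgroup of A generated by a and b is a free group of rank 2. -/

import Mathlib

/-- `altWord a b n` is the prefix of length `n` of the alternating word `abab…`
in the free group. -/
def altWord {α : Type*} (a b : α) : ℕ → FreeGroup α
  | 0 => 1
  | n + 1 => FreeGroup.of a * altWord b a n

/-- The Artin relations associated to a labelled graph. -/
def artinRels {α : Type*} (E : α → α → Prop) (m : α → α → ℕ) : Set (FreeGroup α) :=
  { r | ∃ a b : α, E a b ∧ r = altWord a b (m a b) * (altWord b a (m a b))⁻¹ }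

open scoped Pointwise

/-- Transvection attached to the generator `s`. -/
def artinT {α : Type*} (c : α → α → ℂ) (h0 : ∀ s, c s s = 0) (s : α) : Equiv.Perm (α → ℂ) where
  toFun g := fun t => g t + c s t * g s
  invFun g := fun t => g t - c s t * g s
  left_inv g := by
    funext t
    simp [h0]
  right_inv g := by
    funext t
    simp [h0]

theorem artinT_apply {α : Type*} (c : α → α → ℂ) (h0 : ∀ s, c s s = 0) (s : α) (g : α → ℂ) (t : α) :
    artinT c h0 s g t = g t + c s t * g s := rfl

theorem artinT_inv_apply {α : Type*} (c : α → α → ℂ) (h0 : ∀ s, c s s = 0) (s : α) (g : α → ℂ)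
    (t : α) : (artinT c h0 s)⁻¹ g t = g t - c s t * g s := rfl

theorem artinT_zpow {α : Type*} (c : α → α → ℂ) (h0 : ∀ s, c s s = 0) (s : α) (n : ℤ) :
    ∀ (g : α → ℂ) (t : α), (artinT c h0 s ^ n) g t = g t + n * c s t * g s := by
  induction n with
  | zero => intro g t; simp
  | succ n ih =>
    intro g t
    rw [zpow_add_one, Equiv.Perm.mul_apply, ih, artinT_apply, artinT_apply, h0]
    push_cast
    ring
  | pred n ih =>
    intro g t
    rw [zpow_sub_one, Equiv.Perm.mul_apply, ih, artinT_inv_apply, artinT_inv_apply, h0]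
    push_cast
    ring

/-- Alternating product, built from the right. -/
def artinR {G : Type*} [Group G] (A B : G) : ℕ → G
  | 0 => 1
  | n + 1 => (if Even n then A else B) * artinR A B n

theorem lift_altWord {α G : Type*} [Group G] (f : α → G) (n : ℕ) : ∀ a b : α,
    FreeGroup.lift f (altWord a b n) =
      if Even n then artinR (f b) (f a) n else artinR (f a) (f b) n := by
  induction n with
  | zero => intro a b; simp [altWord, artinR]
  | succ n ih =>
    intro a b
    rw [altWord, map_mul, ih, FreeGroup.lift_apply_of]
    by_cases h : Even n
    · simp [h, Nat.even_add_one, artinR]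
    · simp [h, Nat.even_add_one, artinR]

theorem artinR_shape {α : Type*} (c : α → α → ℂ) (h0 : ∀ s, c s s = 0) (a b : α) (g : α → ℂ)
    (n : ℕ) : ∃ X Y : ℂ, ∀ u, artinR (artinT c h0 a) (artinT c h0 b) n g u
      = g u + c a u * X + c b u * Y := by
  induction n with
  | zero => exact ⟨0, 0, by simp [artinR]⟩
  | succ n ih =>
    obtain ⟨X, Y, h⟩ := ih
    by_cases hn : Even n
    · refine ⟨X + artinR (artinT c h0 a) (artinT c h0 b) n g a, Y, fun u => ?_⟩
      simp only [artinR, hn, if_true, Equiv.Perm.mul_apply, artinT_apply]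
      rw [h u]; ring
    · refine ⟨X, Y + artinR (artinT c h0 a) (artinT c h0 b) n g b, fun u => ?_⟩
      simp only [artinR, hn, if_false, Equiv.Perm.mul_apply, artinT_apply]
      rw [h u]; ring

/-- Explicit solution of the recurrence. -/
noncomputable def artinK (θ x y : ℂ) (n : ℕ) : ℂ :=
  Complex.I ^ n * (-Complex.I * x * Complex.sin (n * θ) - Complex.sin ((n - 1) * θ) * y)

theorem artinK_rec (θ x y : ℂ) (n : ℕ) : artinK θ x y (n + 2) =
    artinK θ x y n + 2 * Complex.cos θ * Complex.I * artinK θ x y (n + 1) := by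
  have h1 : ∀ t : ℂ, Complex.sin ((t + 1) * θ) =
      2 * Complex.cos θ * Complex.sin (t * θ) - Complex.sin ((t - 1) * θ) := by
    intro t
    rw [add_mul, sub_mul, one_mul, Complex.sin_add, Complex.sin_sub]
    ring
  unfold artinK
  have e1 := h1 (n + 1)
  have e2 := h1 n
  push_cast
  rw [show ((n : ℂ) + 2) = n + 1 + 1 by ring, show ((n : ℂ) + 1 + 1 - 1) = n + 1 by ring, e1,
    show ((n : ℂ) + 1 - 1) = n by ring, e2]
  have hI : Complex.I ^ 2 = -1 := Complex.I_sq
  rw [pow_add, hI, pow_succ]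
  linear_combination (2 * Complex.cos θ * Complex.I ^ n * (Complex.I * x *
    (2 * Complex.cos θ * Complex.sin (n * θ) - Complex.sin ((n - 1) * θ)) +
      Complex.sin (n * θ) * y)) * hI

theorem artinR_coords {α : Type*} (c : α → α → ℂ) (h0 : ∀ s, c s s = 0) (a b : α) (g : α → ℂ)
    (θ : ℂ) (hc1 : c a b = 2 * Complex.cos θ * Complex.I)
    (hc2 : c b a = 2 * Complex.cos θ * Complex.I) (n : ℕ) :
    (Complex.sin θ * artinR (artinT c h0 a) (artinT c h0 b) n g (if Even n then b else a)
      = artinK θ (g a) (g b) n) ∧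
    (Complex.sin θ * artinR (artinT c h0 a) (artinT c h0 b) n g (if Even n then a else b)
      = artinK θ (g a) (g b) (n + 1)) := by
  induction n with
  | zero =>
    simp only [artinR, artinK]
    constructor
    · simp
    · simp
      linear_combination (g a * Complex.sin θ) * Complex.I_sq
  | succ n ih =>
    obtain ⟨i1, i2⟩ := ih
    rw [artinK_rec, ← i1, ← i2]
    by_cases h : Even n
    · simp only [h, Nat.even_add_one, not_true, if_true, if_false, artinR, Equiv.Perm.mul_apply,
        artinT_apply, h0, hc1, hc2]
      constructor <;> ring
    · simp only [h, Nat.even_add_one, not_false_iff, if_true, if_false, artinR,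
        Equiv.Perm.mul_apply, artinT_apply, h0, hc1, hc2]
      constructor <;> ring

theorem artinK_end (m : ℕ) (hm : 2 ≤ m) (x y : ℂ) :
    artinK (Real.pi / m) x y m = artinK (Real.pi / m) y x (m + 1) := by
  have hm0 : (m : ℂ) ≠ 0 := by
    have : m ≠ 0 := by omega
    exact_mod_cast this
  have e0 : (m : ℂ) * (Real.pi / m) = Real.pi := by field_simp
  unfold artinK
  push_cast
  rw [show ((m : ℂ) + 1 - 1) = m by ring, add_mul, sub_mul, e0, one_mul, Complex.sin_add,
    Complex.sin_sub, Complex.sin_pi, Complex.cos_pi, pow_succ]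
  linear_combination (-Complex.I ^ m * y * Complex.sin (Real.pi / m)) * Complex.I_sq

theorem artinR_braid {α : Type*} (c : α → α → ℂ) (h0 : ∀ s, c s s = 0) (a b : α)
    (m : ℕ) (hm : 2 ≤ m)
    (hc1 : c a b = 2 * Complex.cos (Real.pi / m) * Complex.I)
    (hc2 : c b a = 2 * Complex.cos (Real.pi / m) * Complex.I) :
    artinR (artinT c h0 a) (artinT c h0 b) m = artinR (artinT c h0 b) (artinT c h0 a) m := by
  rcases Nat.lt_or_ge 2 m with h3 | h2
  · have hm3 : (3 : ℝ) ≤ m := by exact_mod_cast h3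
    have hpi := Real.pi_pos
    have hlt : Real.pi / m < Real.pi / 2 := by
      apply div_lt_div_of_pos_left hpi <;> linarith
    have hpos : 0 < Real.pi / m := by positivity
    have hcos : Complex.cos (Real.pi / m) ≠ 0 := by
      have := (Real.cos_pos_of_mem_Ioo (x := Real.pi / m) ⟨by linarith, hlt⟩).ne'
      exact_mod_cast this
    have hsin : Complex.sin (Real.pi / m) ≠ 0 := by
      have := (Real.sin_pos_of_pos_of_lt_pi (x := Real.pi / m) hpos (by linarith)).ne'
      exact_mod_cast this
    have hc1' : c a b ≠ 0 := by rw [hc1]; simp [hcos]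
    have hc2' : c b a ≠ 0 := by rw [hc2]; simp [hcos]
    ext g u
    obtain ⟨p1, p2⟩ := artinR_coords c h0 a b g _ hc1 hc2 m
    obtain ⟨q1, q2⟩ := artinR_coords c h0 b a g _ hc2 hc1 m
    rw [artinK_end m hm, ← q2] at p1
    rw [← artinK_end m hm, ← q1] at p2
    have p1 := mul_left_cancel₀ hsin p1
    have p2 := mul_left_cancel₀ hsin p2
    have r : artinR (artinT c h0 a) (artinT c h0 b) m g a
          = artinR (artinT c h0 b) (artinT c h0 a) m g a ∧
        artinR (artinT c h0 a) (artinT c h0 b) m g b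
          = artinR (artinT c h0 b) (artinT c h0 a) m g b := by
      by_cases h : Even m
      · simp only [h, if_true] at p1 p2
        exact ⟨p2, p1⟩
      · simp only [h, if_false] at p1 p2
        exact ⟨p1, p2⟩
    obtain ⟨ra, rb⟩ := r
    obtain ⟨X, Y, hX⟩ := artinR_shape c h0 a b g m
    obtain ⟨X', Y', hX'⟩ := artinR_shape c h0 b a g m
    rw [hX, hX', h0] at ra rb
    have hY : Y = X' := mul_left_cancel₀ hc2' (by linear_combination ra)
    have hXX : X = Y' := by
      exact mul_left_cancel₀ hc1' (by linear_combination rb)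
    rw [hX, hX', hY, hXX]
    ring
  · obtain rfl : m = 2 := by omega
    have hz : Complex.cos (Real.pi / (2 : ℕ)) = 0 := by
      push_cast
      exact Complex.cos_pi_div_two
    rw [hz] at hc1 hc2
    ext g u
    simp [artinR, artinT_apply, hc1, hc2]
    ring

theorem artin_pingpong {α : Type*} (c : α → α → ℂ) (h0 : ∀ s, c s s = 0) (a b : α) (hab : a ≠ b)
    (hc1 : c a b = 3) (hc2 : c b a = 3) :
    Function.Injective (FreeGroup.lift (fun d : Bool =>
      if d then artinT c h0 a else artinT c h0 b)) := by
  set T : Bool → Equiv.Perm (α → ℂ) := fun d => if d then artinT c h0 a else artinT c h0 b with hT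
  have key : ∀ (n : ℤ), n ≠ 0 → ∀ x y : ℂ, ‖y‖ < ‖x‖ → ‖x‖ < ‖y + n * 3 * x‖ := by
    intro n hn x y hxy
    have h1 : (1 : ℝ) ≤ ‖(n : ℂ)‖ := by
      rw [Complex.norm_intCast]
      exact_mod_cast Int.one_le_abs hn
    have h2 : ‖(n : ℂ) * 3 * x‖ ≤ ‖y + n * 3 * x‖ + ‖y‖ := by
      have := norm_sub_le (y + n * 3 * x) y
      simpa using this
    have h3 : ‖(n : ℂ) * 3 * x‖ = ‖(n : ℂ)‖ * 3 * ‖x‖ := by simp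
    nlinarith [norm_nonneg x]
  have : FreeGroup.lift T =
      (Monoid.CoprodI.lift fun i => FreeGroup.lift fun _ => T i).comp
        (@freeGroupEquivCoprodI Bool).toMonoidHom := by
    ext i
    simp
  rw [this, MonoidHom.coe_comp]
  clear this
  refine Function.Injective.comp ?_ (MulEquiv.injective freeGroupEquivCoprodI)
  let H : Bool → Type _ := fun _i => FreeGroup Unit
  let f : ∀ i, H i →* Equiv.Perm (α → ℂ) := fun i => FreeGroup.lift fun _ => T i
  let X : Bool → Set (α → ℂ) := fun i => if i then {g | ‖g a‖ < ‖g b‖} else {g | ‖g b‖ < ‖g a‖}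
  classical
  apply Monoid.CoprodI.lift_injective_of_ping_pong f _ X
  · intro i
    cases i
    · exact ⟨fun t => if t = a then 1 else 0, by simp [X, hab.symm]⟩
    · exact ⟨fun t => if t = b then 1 else 0, by simp [X, hab]⟩
  · intro i j hij
    rw [Function.onFun, Set.disjoint_left]
    cases i <;> cases j <;> simp [X] at hij ⊢ <;> intro g hg <;> exact hg.le
  · change Pairwise fun i j => ∀ h : H i, h ≠ 1 → f i h • X j ⊆ X i
    rintro i j hij
    refine FreeGroup.freeGroupUnitEquivInt.forall_congr_left.mpr ?_
    intro n hne1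
    change FreeGroup.lift (fun _ => T i) (FreeGroup.of () ^ n) • X j ⊆ X i
    simp only [map_zpow, FreeGroup.lift_apply_of]
    have hnne0 : n ≠ 0 := by
      rintro rfl
      apply hne1
      simp [H, FreeGroup.freeGroupUnitEquivInt]
    rintro _ ⟨g, hg, rfl⟩
    cases i <;> cases j <;> simp [X, hT, artinT_zpow, h0, hc1, hc2] at hij hg ⊢
    · exact key n hnne0 _ _ hg
    · exact key n hnne0 _ _ hg
  · right
    use true
    simp only [H]
    rw [FreeGroup.freeGroupUnitEquivInt.cardinal_eq, Cardinal.mk_denumerable]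
    exact Cardinal.natCast_le_aleph0

/-- If two standard generators `a, b` of an Artin group are not connected by an edge, then
the subgroup they generate is free of rank 2: the natural map from the free group on two
letters sending the two generators to `a` and `b` is injective, with image `⟨a, b⟩`. -/
theorem artin_nonadjacent_free {α : Type*} (E : α → α → Prop) (m : α → α → ℕ)
    (hsymm : Symmetric E) (hirr : ∀ a, ¬ E a a)
    (hm : ∀ a b, E a b → 2 ≤ m a b) (hmsymm : ∀ a b, m a b = m b a)
    (a b : α) (hab : a ≠ b) (hnoedge : ¬ E a b) :
    Function.Injective
      (FreeGroup.lift (fun c : Bool =>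
        if c then (PresentedGroup.of a : PresentedGroup (artinRels E m))
        else PresentedGroup.of b)) ∧
    (FreeGroup.lift (fun c : Bool =>
        if c then (PresentedGroup.of a : PresentedGroup (artinRels E m))
        else PresentedGroup.of b)).range =
      Subgroup.closure {PresentedGroup.of a, PresentedGroup.of b} := by
  classical
  constructor
  · let c : α → α → ℂ := fun s t => if s = t then 0 else
      if E s t then 2 * Complex.cos (Real.pi / m s t) * Complex.I else 3
    have h0 : ∀ s, c s s = 0 := fun s => by simp [c]
    have hrel : ∀ r ∈ artinRels E m, FreeGroup.lift (artinT c h0) r = 1 := by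
      rintro r ⟨s, t, hst, rfl⟩
      have hne : s ≠ t := fun h => hirr t (h ▸ hst)
      have hbr := artinR_braid c h0 s t (m s t) (hm s t hst)
        (by simp [c, hne, hst]) (by simp [c, hne.symm, hsymm hst, hmsymm t s])
      rw [map_mul, map_inv, mul_inv_eq_one, lift_altWord, lift_altWord, hbr]
    have hnoedge' : ¬ E b a := fun h => hnoedge (hsymm h)
    have hinj := artin_pingpong c h0 a b hab (by simp [c, hab, hnoedge])
      (by simp [c, hab.symm, hnoedge'])
    have hcomp : FreeGroup.lift (fun d : Bool => if d then artinT c h0 a else artinT c h0 b) =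
        (PresentedGroup.toGroup hrel).comp (FreeGroup.lift (fun c : Bool =>
        if c then (PresentedGroup.of a : PresentedGroup (artinRels E m))
        else PresentedGroup.of b)) := by
      ext1 d
      cases d <;> simp
    rw [hcomp, MonoidHom.coe_comp] at hinj
    exact hinj.of_comp
  · rw [FreeGroup.range_lift_eq_closure]
    congr 1
    ext x
    simp [eq_comm, or_comm]
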